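/- Let a, P1p, P2p, s be real numbers with 0 ≤ a ≤ 1, P1p ≥ 0, P2p ≥ 0, s ≥ 0, and set d := 1 + a^2 * P1p. Then C(P2p / d) + C(s) ≥ C( (P2p + a^2 * s) / d ). -/

import Mathlib

/-- Gaussian capacity function: C(x) = (1/2) * log₂(1 + x). -/
noncomputable def C (x : ℝ) : ℝ := (1/2) * Real.logb 2 (1 + x)

theorem C_le_C {x y : ℝ} (hx : -1 < x) (hxy : x ≤ y) : C x ≤ C y := by
  have hx' : 0 < 1 + x := by linarith
  unfold C
  gcongr
  exact one_lt_two

theorem C_add_C {x y : ℝ} (hx : -1 < x) (hy : -1 < y) : C x + C y = C (x + y + x * y) := by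
  have hx' : 1 + x ≠ 0 := by linarith
  have hy' : 1 + y ≠ 0 := by linarith
  unfold C
  rw [← mul_add, ← Real.logb_mul hx' hy']
  ring_nf

/-- The bound on `a ^ 2` compares the coefficients of `s` in `d + P2p + a ^ 2 * s` and
`(d + P2p) * (1 + s)`, the arguments of the two logarithms scaled by `d`. -/
theorem stmt_7_general {a P1p P2p s d : ℝ} (hP1p : 0 ≤ P1p) (hP2p : 0 ≤ P2p) (hs : 0 ≤ s)
    (hd : d = 1 + a ^ 2 * P1p) (ha : a ^ 2 ≤ d + P2p) :
    C ((P2p + a ^ 2 * s) / d) ≤ C (P2p / d) + C s := by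
  have hd_pos : 0 < d := by rw [hd]; positivity
  have neg_one_lt {x : ℝ} (hx : 0 ≤ x) : -1 < x := neg_one_lt_zero.trans_le hx
  have snr_le : (P2p + a ^ 2 * s) / d ≤ P2p / d + s + P2p / d * s :=
    calc (P2p + a ^ 2 * s) / d ≤ (P2p + (d + P2p) * s) / d := by gcongr
      _ = P2p / d + s + P2p / d * s := by field_simp; ring
  rw [C_add_C (neg_one_lt (by positivity)) (neg_one_lt hs)]
  exact C_le_C (neg_one_lt (by positivity)) snr_le

theorem stmt_7 (a P1p P2p s d : ℝ) (ha0 : 0 ≤ a) (ha1 : a ≤ 1)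
    (hP1p : 0 ≤ P1p) (hP2p : 0 ≤ P2p) (hs : 0 ≤ s)
    (hd : d = 1 + a ^ 2 * P1p) :
    C ((P2p + a ^ 2 * s) / d) ≤ C (P2p / d) + C s := by
  have one_le_d : 1 ≤ d := hd ▸ le_add_of_nonneg_right (by positivity)
  exact stmt_7_general hP1p hP2p hs hd (by linarith [pow_le_one₀ ha0 ha1 (n := 2)])
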